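/- The set of positive integers N of the form N = m₁·m₂, where q is a prime power and m₁, m₂ are integers satisfying |m₁ - (q+1)| ≤ 2√q and |m₂ - (q+1)| ≤ 2√q, has natural density zero in the positive integers: the cardinality of its intersection with [1, X], divided by X, tends to 0 as X → ∞. -/

import Mathlib

/-- The set of positive integers `N ≤ X` that are a product of two integers lying in the
Hasse interval `[q + 1 - 2√q, q + 1 + 2√q]` of a common prime power `q`. -/
def hasseProductSet (X : ℝ) : Set ℕ :=
  {N : ℕ | 1 ≤ N ∧ (N : ℝ) ≤ X ∧
    ∃ q : ℕ, IsPrimePow q ∧ ∃ m₁ m₂ : ℤ,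
      |(m₁ : ℝ) - ((q : ℝ) + 1)| ≤ 2 * Real.sqrt q ∧
      |(m₂ : ℝ) - ((q : ℝ) + 1)| ≤ 2 * Real.sqrt q ∧
      (N : ℤ) = m₁ * m₂}

/-!
A product of two integers in the Hasse interval of `q` is at least `(√q - 1) ^ 4`, so a product
that is at most `X` comes from some `q ≤ 4√X`. The Hasse interval of such a `q` contains
`O(√q) = O(X ^ (1 / 4))` integers, hence each `q` yields `O(√X)` products. If `q` ranges over a set
of density zero, there are only `o(√X)` admissible `q`, and so `o(X)` products.

The prime powers have density zero: `π(x) = o(x)` by Chebyshev's bound, and since `Λ ≥ log 2` on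
prime powers, those that are not prime are counted by `(ψ(x) - θ(x)) / log 2 = O(√x)`.
-/

open Asymptotics Filter Pointwise

section DensityZero

/-- The elements of `S` that are at most `x`; its cardinality is the counting function of `S`. -/
def upTo (S : Set ℕ) (x : ℝ) : Set ℕ :=
  {n | (n : ℝ) ≤ x ∧ n ∈ S}

/-- `S` has natural density zero. The counting function takes a real argument and also counts `0`,
which does not affect the density. -/
def HasDensityZero (S : Set ℕ) : Prop :=
  (fun x : ℝ ↦ ((upTo S x).ncard : ℝ)) =o[atTop] fun x : ℝ ↦ x

theorem finite_upTo (S : Set ℕ) (x : ℝ) : (upTo S x).Finite :=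
  (Set.finite_Iic ⌊x⌋₊).subset fun _ hn ↦ Nat.le_floor hn.1

theorem upTo_union (S T : Set ℕ) (x : ℝ) : upTo (S ∪ T) x = upTo S x ∪ upTo T x :=
  Set.ext fun _ ↦ and_or_left

theorem HasDensityZero.of_ncard_upTo_le {S : Set ℕ} {f : ℝ → ℝ}
    (hle : ∀ᶠ x in atTop, ((upTo S x).ncard : ℝ) ≤ f x) (hf : f =o[atTop] fun x : ℝ ↦ x) :
    HasDensityZero S := by
  refine IsBigO.trans_isLittleO (.of_norm_eventuallyLE ?_) hf
  filter_upwards [hle] with x hx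
  rwa [Real.norm_natCast]

theorem HasDensityZero.union {S T : Set ℕ} (hS : HasDensityZero S) (hT : HasDensityZero T) :
    HasDensityZero (S ∪ T) := by
  refine .of_ncard_upTo_le (.of_forall fun x ↦ ?_) (hS.add hT)
  rw [upTo_union]
  exact_mod_cast Set.ncard_union_le _ _

end DensityZero

section PrimePowers

open Chebyshev Finset
open scoped ArithmeticFunction.vonMangoldt Nat.Prime

theorem ncard_upTo_setOfPred_prime_le (x : ℝ) : (upTo {p | p.Prime} x).ncard ≤ π ⌊x⌋₊ := by
  rw [← Nat.primesLE_card_eq_primeCounting, ← Set.ncard_coe_finset]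
  refine Set.ncard_le_ncard (fun p hp ↦ ?_) (finite_toSet _)
  exact Nat.mem_primesLE.2 ⟨Nat.le_floor hp.1, hp.2⟩

theorem isLittleO_div_log_id :
    (fun x : ℝ ↦ x / Real.log x) =o[atTop] fun x : ℝ ↦ x := by
  have hlog : (fun x : ℝ ↦ (Real.log x)⁻¹) =o[atTop] fun _ ↦ (1 : ℝ) :=
    (isLittleO_one_iff ℝ).2 Real.tendsto_log_atTop.inv_tendsto_atTop
  simpa only [div_eq_mul_inv, mul_one] using (isBigO_refl (fun x : ℝ ↦ x) atTop).mul_isLittleO hlog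

theorem hasDensityZero_setOfPred_prime : HasDensityZero {p | p.Prime} := by
  refine .of_ncard_upTo_le (f := fun x ↦ (Real.log 4 + 1) * (x / Real.log x)) ?_
    (isLittleO_div_log_id.const_mul_left _)
  filter_upwards [eventually_primeCounting_le one_pos] with x hπ
  calc ((upTo {p | p.Prime} x).ncard : ℝ) ≤ π ⌊x⌋₊ := mod_cast ncard_upTo_setOfPred_prime_le x
    _ ≤ (Real.log 4 + 1) * (x / Real.log x) := by rwa [← mul_div_assoc]

theorem log_two_le_vonMangoldt {n : ℕ} (hn : IsPrimePow n) : Real.log 2 ≤ Λ n := by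
  have htwo : (2 : ℝ) ≤ n.minFac := mod_cast (Nat.minFac_prime hn.ne_one).two_le
  rw [ArithmeticFunction.vonMangoldt_apply, if_pos hn]
  exact Real.log_le_log two_pos htwo

theorem ncard_upTo_isPrimePow_not_prime_mul_log_two_le (x : ℝ) :
    (upTo {n | IsPrimePow n ∧ ¬ n.Prime} x).ncard * Real.log 2 ≤ ψ x - θ x := by
  rw [Set.ncard_eq_toFinset_card _ (finite_upTo _ x), ← nsmul_eq_mul, ← sum_const,
    psi_sub_theta_eq_sum_not_prime]
  set s := (finite_upTo {n | IsPrimePow n ∧ ¬ n.Prime} x).toFinset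
  have hmem {n : ℕ} (hn : n ∈ s) : (n : ℝ) ≤ x ∧ IsPrimePow n ∧ ¬ n.Prime :=
    (finite_upTo _ x).mem_toFinset.1 hn
  calc ∑ _n ∈ s, Real.log 2 ≤ ∑ n ∈ s, Λ n :=
        sum_le_sum fun n hn ↦ log_two_le_vonMangoldt (hmem hn).2.1
    _ ≤ ∑ n ∈ Ioc 0 ⌊x⌋₊ with ¬ n.Prime, Λ n := by
        refine sum_le_sum_of_subset_of_nonneg (fun n hn ↦ ?_)
          fun _ _ _ ↦ ArithmeticFunction.vonMangoldt_nonneg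
        obtain ⟨hnx, hpow, hprime⟩ := hmem hn
        exact mem_filter.2 ⟨mem_Ioc.2 ⟨hpow.pos, Nat.le_floor hnx⟩, hprime⟩

theorem isLittleO_sqrt_id : Real.sqrt =o[atTop] fun x : ℝ ↦ x :=
  .of_tendsto_div_atTop (by simpa only [Real.div_sqrt] using Real.tendsto_sqrt_atTop)

theorem hasDensityZero_setOfPred_isPrimePow_not_prime :
    HasDensityZero {n : ℕ | IsPrimePow n ∧ ¬ n.Prime} := by
  refine .of_ncard_upTo_le (f := fun x ↦ (Real.log 2)⁻¹ * (ψ x - θ x)) (.of_forall fun x ↦ ?_)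
    ((isBigO_psi_sub_theta_sqrt.trans_isLittleO isLittleO_sqrt_id).const_mul_left _)
  rw [inv_mul_eq_div, le_div_iff₀ (Real.log_pos one_lt_two)]
  exact ncard_upTo_isPrimePow_not_prime_mul_log_two_le x

theorem hasDensityZero_setOfPred_isPrimePow : HasDensityZero {n : ℕ | IsPrimePow n} := by
  have hsplit : {n : ℕ | IsPrimePow n} = {n | n.Prime} ∪ {n | IsPrimePow n ∧ ¬ n.Prime} := by
    ext n
    have := Nat.Prime.isPrimePow (p := n)
    grind
  rw [hsplit]
  exact hasDensityZero_setOfPred_prime.union hasDensityZero_setOfPred_isPrimePow_not_prime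

end PrimePowers

section HasseInterval

/-- The integers in the Hasse interval `[t + 1 - 2√t, t + 1 + 2√t]`, for real `t`. -/
noncomputable def hasseInterval (t : ℝ) : Finset ℤ :=
  Finset.Icc ⌈t + 1 - 2 * √t⌉ ⌊t + 1 + 2 * √t⌋

theorem mem_hasseInterval {t : ℝ} {m : ℤ} :
    m ∈ hasseInterval t ↔ |(m : ℝ) - (t + 1)| ≤ 2 * √t := by
  rw [hasseInterval, Finset.mem_Icc, Int.ceil_le, Int.le_floor, abs_sub_comm,
    Set.mem_Icc_iff_abs_le, Set.mem_Icc]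

theorem card_hasseInterval_le (t : ℝ) : ((hasseInterval t).card : ℝ) ≤ 4 * √t + 1 := by
  have hsqrt := Real.sqrt_nonneg t
  have hlower := Int.le_ceil (t + 1 - 2 * √t)
  have hupper := Int.floor_le (t + 1 + 2 * √t)
  rw [hasseInterval, Int.card_Icc, ← Int.cast_natCast, Int.toNat_eq_max]
  push_cast
  exact max_le (by linarith) (by linarith)

theorem card_hasseInterval_mul_self_le {t y : ℝ} (hty : t ≤ y) (hy : 1 ≤ y) :
    ((hasseInterval t * hasseInterval t).card : ℝ) ≤ 25 * y := by
  have hcard : ((hasseInterval t).card : ℝ) ≤ 5 * √y := by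
    linarith [card_hasseInterval_le t, Real.sqrt_le_sqrt hty, Real.one_le_sqrt.2 hy]
  calc ((hasseInterval t * hasseInterval t).card : ℝ)
      ≤ (hasseInterval t).card * (hasseInterval t).card := mod_cast Finset.card_mul_le
    _ ≤ (5 * √y) * (5 * √y) := by gcongr
    _ = 25 * y := by rw [mul_mul_mul_comm, Real.mul_self_sqrt (by linarith)]; norm_num

theorem sq_sqrt_sub_one_le_of_mem_hasseInterval {t : ℝ} (ht : 0 ≤ t) {m : ℤ}
    (hm : m ∈ hasseInterval t) : (√t - 1) ^ 2 ≤ m := by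
  have hlower := (abs_le.1 (mem_hasseInterval.1 hm)).1
  rw [sub_sq, Real.sq_sqrt ht]
  linarith

theorem le_four_mul_sqrt_of_mem_hasseInterval {t X : ℝ} (ht : 0 ≤ t) (hX : 1 ≤ X) {m₁ m₂ : ℤ}
    (h₁ : m₁ ∈ hasseInterval t) (h₂ : m₂ ∈ hasseInterval t) (hle : (m₁ * m₂ : ℝ) ≤ X) :
    t ≤ 4 * √X := by
  have hfourth : ((√t - 1) ^ 2) ^ 2 ≤ X := by
    rw [sq ((√t - 1) ^ 2)]
    grw [← hle]
    have hm₁ := sq_sqrt_sub_one_le_of_mem_hasseInterval ht h₁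
    have hm₂ := sq_sqrt_sub_one_le_of_mem_hasseInterval ht h₂
    exact mul_le_mul hm₁ hm₂ (sq_nonneg _) ((sq_nonneg _).trans hm₁)
  have hsub : √t - 1 ≤ √√X := Real.le_sqrt_of_sq_le (Real.le_sqrt_of_sq_le hfourth)
  have hone : 1 ≤ √√X := Real.one_le_sqrt.2 (Real.one_le_sqrt.2 hX)
  calc t = √t ^ 2 := (Real.sq_sqrt ht).symm
    _ ≤ (2 * √√X) ^ 2 := by gcongr; linarith
    _ = 4 * √X := by rw [mul_pow, Real.sq_sqrt (Real.sqrt_nonneg X)]; norm_num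

end HasseInterval

section HasseProducts

/-- The positive integers that are a product of two integers in the Hasse interval of a common
`q ∈ Q`; for `Q` the prime powers, these are the integers of the corollary. -/
def hasseProducts (Q : Set ℕ) : Set ℕ :=
  {N | 1 ≤ N ∧ ∃ q ∈ Q, ∃ m₁ m₂ : ℤ,
    m₁ ∈ hasseInterval q ∧ m₂ ∈ hasseInterval q ∧ (N : ℤ) = m₁ * m₂}

theorem hasseProductSet_eq_upTo (X : ℝ) :
    hasseProductSet X = upTo (hasseProducts {q | IsPrimePow q}) X := by
  simp only [hasseProductSet, upTo, hasseProducts, mem_hasseInterval, Set.mem_ofPred_eq,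
    and_left_comm]

theorem exists_mem_upTo_of_mem_upTo_hasseProducts {Q : Set ℕ} {X : ℝ} {N : ℕ}
    (hN : N ∈ upTo (hasseProducts Q) X) :
    ∃ q ∈ upTo Q (4 * √X), (N : ℤ) ∈ hasseInterval q * hasseInterval q := by
  obtain ⟨hNX, hN₁, q, hq, m₁, m₂, h₁, h₂, hprod⟩ := hN
  have hX : 1 ≤ X := hNX.trans' (mod_cast hN₁)
  have hle : (m₁ * m₂ : ℝ) ≤ X := by rwa [← Int.cast_mul, ← hprod, Int.cast_natCast]
  exact ⟨q, ⟨le_four_mul_sqrt_of_mem_hasseInterval q.cast_nonneg hX h₁ h₂ hle, hq⟩,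
    hprod ▸ Finset.mul_mem_mul h₁ h₂⟩

theorem ncard_upTo_hasseProducts_le (Q : Set ℕ) {X : ℝ} (hX : 1 ≤ X) :
    ((upTo (hasseProducts Q) X).ncard : ℝ) ≤ (upTo Q (4 * √X)).ncard * (100 * √X) := by
  have hfin := finite_upTo Q (4 * √X)
  let products : Finset ℤ := hfin.toFinset.biUnion fun q ↦ hasseInterval q * hasseInterval q
  have hncard : (upTo (hasseProducts Q) X).ncard ≤ products.card := by
    rw [← Set.ncard_coe_finset]
    refine Set.ncard_le_ncard_of_injOn ((↑) : ℕ → ℤ) (fun N hN ↦ ?_) Nat.cast_injective.injOn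
      products.finite_toSet
    obtain ⟨q, hq, hNq⟩ := exists_mem_upTo_of_mem_upTo_hasseProducts hN
    exact Finset.mem_biUnion.2 ⟨q, hfin.mem_toFinset.2 hq, hNq⟩
  calc ((upTo (hasseProducts Q) X).ncard : ℝ) ≤ products.card := mod_cast hncard
    _ ≤ ∑ q ∈ hfin.toFinset, ((hasseInterval q * hasseInterval q).card : ℝ) :=
        mod_cast Finset.card_biUnion_le
    _ ≤ hfin.toFinset.card • (100 * √X) := by
        refine Finset.sum_le_card_nsmul _ _ _ fun q hq ↦ ?_
        have hq_le : (q : ℝ) ≤ 4 * √X := (hfin.mem_toFinset.1 hq).1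
        have hone : 1 ≤ 4 * √X := by linarith [Real.one_le_sqrt.2 hX]
        linarith [card_hasseInterval_mul_self_le hq_le hone]
    _ = (upTo Q (4 * √X)).ncard * (100 * √X) := by
        rw [nsmul_eq_mul, ← Set.ncard_eq_toFinset_card _ hfin]

end HasseProducts

theorem stmt6_general {Q : Set ℕ} (hQ : HasDensityZero Q) : HasDensityZero (hasseProducts Q) := by
  refine .of_ncard_upTo_le ((eventually_ge_atTop 1).mono fun X ↦ ncard_upTo_hasseProducts_le Q) ?_
  have htendsto : Tendsto (fun X : ℝ ↦ 4 * √X) atTop atTop :=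
    Real.tendsto_sqrt_atTop.const_mul_atTop four_pos
  have hcount : (fun X : ℝ ↦ ((upTo Q (4 * √X)).ncard : ℝ)) =o[atTop] Real.sqrt :=
    (hQ.comp_tendsto htendsto).trans_isBigO ((isBigO_refl _ _).const_mul_left 4)
  refine (hcount.mul_isBigO ((isBigO_refl Real.sqrt atTop).const_mul_left 100)).congr' .rfl ?_
  filter_upwards [eventually_ge_atTop 0] with X hX using Real.mul_self_sqrt hX

/-- Corollary 4.2: the positive integers that are a product of two
integers in a common Hasse interval form a set of natural density zero. -/
theorem stmt6 :
    Filter.Tendsto (fun X : ℝ => ((hasseProductSet X).ncard : ℝ) / X)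
      Filter.atTop (nhds 0) := by
  simp only [hasseProductSet_eq_upTo]
  exact (stmt6_general hasDensityZero_setOfPred_isPrimePow).tendsto_div_nhds_zero
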